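/- For all nonnegative integers s and all positive integers n, and for every integer k ≥ 0, the coefficient of t^k in N_{nn}(t) satisfies: Σ_{s=0}^{∞} S⊖(s, n−1 | s, n−1) t^s = N_{nn}(t)/(1−t)^{2n} as formal power series; concretely, for every s ≥ 0, S⊖(s, n−1 | s, n−1) = Σ_{k=1}^{min(s, n−1)} S⊖(k, n−k | k, n−k) · C(s−k+2n−1, 2n−1). (The rational form H'_n(t) = N_n(t)/(1−t)^{2n} combined with Theorem 3.1, extracting the coefficient of t^s.) -/

import Mathlib

open Finset

open scoped Classical in
/-- `Par a b` is the set of Young diagrams (lower sets of boxes) fitting inside an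
`a × b` rectangle, encoded as finsets of cells `(i, j)` with `i < a` and `j < b`. -/
noncomputable def Par (a b : ℕ) : Finset (Finset (ℕ × ℕ)) :=
  ((Finset.range a ×ˢ Finset.range b).powerset).filter
    (fun S => IsLowerSet (S : Set (ℕ × ℕ)))

/-- `Sdiff a b c d` is the sum of `|λ ⊖ μ|` over all `λ ∈ Par(a×b)` and `μ ∈ Par(c×d)`. -/
noncomputable def Sdiff (a b c d : ℕ) : ℕ :=
  ∑ l ∈ Par a b, ∑ m ∈ Par c d, (symmDiff l m).card

/-- The polynomial `W_{pq}(t) = Σ_{k=0}^{min(p,q)-1} C(p-1,k) C(q-1,k) t^k`. -/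
noncomputable def W (p q : ℕ) : Polynomial ℤ :=
  ∑ k ∈ Finset.range (min p q),
    Polynomial.C (((p - 1).choose k : ℤ) * ((q - 1).choose k : ℤ)) * Polynomial.X ^ k

open scoped symmDiff PowerSeries

/-! Removing the first row of a diagram is a bijection from `Par((a+1)×b)` to pairs `(c, λ)` with
`c ≤ b` and `λ ∈ Par(a×c)`, and first rows of lengths `c`, `d` contribute `|c - d|` to
`|λ ⊖ μ|`. Hence the second difference of `S⊖(s, p-1 | s, q-1)` in `p` and `q` is
`S⊖(s-1, p-1 | s-1, q-1)` plus `|p - q|` times a number of pairs of diagrams, whose generating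
function is `W_{pq}(t)/(1-t)^{p+q-1}`. Read for generating functions, this is the recursion of
`N_{pq}(t)/(1-t)^{p+q}`. Read along the diagonals `(k, p-k | k, q-k)`, it is the recursion of the
coefficients of `N_{pq}`, so that `[t^k] N_{pq} = S⊖(k, p-k | k, q-k)`. -/

theorem mem_Par {a b : ℕ} {S : Finset (ℕ × ℕ)} :
    S ∈ Par a b ↔ (∀ x ∈ S, x.1 < a ∧ x.2 < b) ∧ IsLowerSet (S : Set (ℕ × ℕ)) := by
  simp only [Par, mem_filter, mem_powerset, subset_iff, mem_product, mem_range]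

theorem Par_eq_singleton_empty {a b : ℕ} (h : a = 0 ∨ b = 0) : Par a b = {∅} := by
  ext S
  rw [mem_Par, mem_singleton]
  constructor
  · rintro ⟨hS, -⟩
    refine eq_empty_of_forall_notMem fun x hx => ?_
    have := hS x hx
    omega
  · rintro rfl
    simp [isLowerSet_empty]

/-- The cell set with first row `R` and remaining rows `T`. For a Young diagram `R` is an initial
segment `range c`, but arbitrary rows make `consRow` compatible with symmetric differences. -/
def consRow (R : Finset ℕ) (T : Finset (ℕ × ℕ)) : Finset (ℕ × ℕ) :=
  R.image (fun j => (0, j)) ∪ T.image (fun x => (x.1 + 1, x.2))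

section consRow

variable {R R' : Finset ℕ} {S T : Finset (ℕ × ℕ)} {a b c d i j : ℕ}

@[simp]
theorem zero_mem_consRow : (0, j) ∈ consRow R T ↔ j ∈ R := by
  simp [consRow]

@[simp]
theorem succ_mem_consRow : (i + 1, j) ∈ consRow R T ↔ (i, j) ∈ T := by
  simp [consRow]

theorem consRow_inj : consRow R S = consRow R' T ↔ R = R' ∧ S = T := by
  refine ⟨fun h => ⟨?_, ?_⟩, by rintro ⟨rfl, rfl⟩; rfl⟩
  · ext j
    rw [← zero_mem_consRow (T := S), h, zero_mem_consRow]
  · ext ⟨i, j⟩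
    rw [← succ_mem_consRow (R := R), h, succ_mem_consRow]

theorem succ_row_injective : Function.Injective fun x : ℕ × ℕ => (x.1 + 1, x.2) :=
  fun _ _ h => by simpa [Prod.ext_iff] using h

theorem exists_eq_consRow (S : Finset (ℕ × ℕ)) : ∃ R T, S = consRow R T := by
  refine ⟨S.preimage (fun j => (0, j)) (Prod.mk_right_injective 0).injOn,
    S.preimage (fun x => (x.1 + 1, x.2)) succ_row_injective.injOn, ?_⟩
  ext ⟨_ | i, j⟩ <;> simp only [zero_mem_consRow, succ_mem_consRow, mem_preimage]

theorem card_consRow (R : Finset ℕ) (T : Finset (ℕ × ℕ)) : #(consRow R T) = #R + #T := by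
  have hdisj : Disjoint (R.image fun j => (0, j)) (T.image fun x => (x.1 + 1, x.2)) := by
    simp [disjoint_left]
  rw [consRow, card_union_of_disjoint hdisj,
    card_image_of_injective _ (Prod.mk_right_injective 0),
    card_image_of_injective _ succ_row_injective]

theorem consRow_symmDiff_consRow (R R' : Finset ℕ) (S T : Finset (ℕ × ℕ)) :
    consRow R S ∆ consRow R' T = consRow (R ∆ R') (S ∆ T) := by
  ext ⟨_ | i, j⟩ <;> simp [mem_symmDiff]

theorem card_range_symmDiff_range (c d : ℕ) : (#(range c ∆ range d) : ℤ) = |(c : ℤ) - d| := by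
  have h : range c ∆ range d = Ico (min c d) (max c d) := by
    ext j
    simp only [mem_symmDiff, mem_range, mem_Ico]
    omega
  rw [h, Nat.card_Ico, Nat.cast_sub min_le_max, Nat.cast_max, Nat.cast_min, max_sub_min_eq_abs']

theorem consRow_range_mem_Par_iff :
    consRow (range c) T ∈ Par (a + 1) b ↔ c ≤ b ∧ T ∈ Par a c := by
  constructor
  · intro h
    obtain ⟨hbox, hlower⟩ := mem_Par.1 h
    refine ⟨?_, mem_Par.2 ⟨fun ⟨i, j⟩ hx => ⟨?_, ?_⟩, fun x y hyx hx => ?_⟩⟩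
    · by_contra! hbc
      exact lt_irrefl b (hbox (0, b) (by simpa using hbc)).2
    · simpa using (hbox (i + 1, j) (by simpa using hx)).1
    · have : (0, j) ∈ consRow (range c) T :=
        hlower (a := (i + 1, j)) (by simp) (by simpa using hx)
      simpa using this
    · have : (y.1 + 1, y.2) ∈ consRow (range c) T :=
        hlower (a := (x.1 + 1, x.2)) (by simpa [Prod.le_def] using hyx) (by simpa using hx)
      simpa using this
  · rintro ⟨hcb, hT⟩
    obtain ⟨hbox, hlower⟩ := mem_Par.1 hT
    refine mem_Par.2 ⟨?_, ?_⟩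
    · rintro ⟨_ | i, j⟩ hx
      · exact ⟨a.succ_pos, (by simpa using hx : j < c).trans_le hcb⟩
      · obtain ⟨hi, hj⟩ := hbox (i, j) (by simpa using hx)
        exact ⟨by simpa using hi, hj.trans_le hcb⟩
    · rintro ⟨_ | i, j⟩ ⟨_ | i', j'⟩ ⟨hi, hj⟩ hx
      · simpa using hj.trans_lt (by simpa using hx : j < c)
      · simp at hi
      · simpa using hj.trans_lt (hbox (i, j) (by simpa using hx)).2
      · have : (i', j') ∈ T := hlower (a := (i, j)) ⟨by simpa using hi, hj⟩ (by simpa using hx)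
        simpa using this

theorem exists_eq_consRow_range (hS : S ∈ Par a b) : ∃ c T, S = consRow (range c) T := by
  obtain ⟨R, T, rfl⟩ := exists_eq_consRow S
  obtain ⟨-, hlower⟩ := mem_Par.1 hS
  have hR : IsLowerSet (R : Set ℕ) := fun i j hji hi => by
    have : (0, j) ∈ consRow R T :=
      hlower (a := (0, i)) (by simpa using hji) (by simpa using hi)
    simpa using this
  obtain hR | ⟨c, hc⟩ := hR.eq_univ_or_Iio
  · exact absurd (hR ▸ R.finite_toSet) Set.infinite_univ
  · refine ⟨c, T, ?_⟩
    rw [show R = range c from coe_injective (by rw [hc, coe_range])]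

end consRow

theorem sum_Par_succ {M : Type*} [AddCommMonoid M] (a b : ℕ) (f : Finset (ℕ × ℕ) → M) :
    ∑ l ∈ Par (a + 1) b, f l
      = ∑ c ∈ range (b + 1), ∑ l ∈ Par a c, f (consRow (range c) l) := by
  rw [sum_sigma']
  symm
  refine sum_nbij (fun x => consRow (range x.1) x.2) ?_ ?_ ?_ fun _ _ => rfl
  · rintro ⟨c, T⟩ h
    rw [mem_sigma, mem_range_succ_iff] at h
    exact consRow_range_mem_Par_iff.2 h
  · rintro ⟨c, S⟩ - ⟨d, T⟩ - h
    obtain ⟨hcd, rfl⟩ := consRow_inj.1 h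
    rw [show c = d by simpa using congrArg card hcd]
  · intro S hS
    obtain ⟨c, T, rfl⟩ := exists_eq_consRow_range hS
    refine ⟨⟨c, T⟩, ?_, rfl⟩
    rw [mem_coe, mem_sigma, mem_range_succ_iff]
    exact consRow_range_mem_Par_iff.1 hS

theorem card_Par (a b : ℕ) : #(Par a b) = (b + a).choose b := by
  induction a generalizing b with
  | zero => simp [Par_eq_singleton_empty]
  | succ a ih =>
    calc #(Par (a + 1) b) = ∑ c ∈ range (b + 1), #(Par a c) := by
          simp only [card_eq_sum_ones, sum_Par_succ]
      _ = ∑ c ∈ range (b + 1), (c + a).choose a := by simp only [ih, Nat.choose_symm_add]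
      _ = (b + (a + 1)).choose b := by
          rw [Nat.sum_range_add_choose, Nat.choose_symm_add, add_assoc]

theorem Sdiff_zero_rows (b d : ℕ) : Sdiff 0 b 0 d = 0 := by
  simp [Sdiff, Par_eq_singleton_empty]

theorem Sdiff_zero_cols (a c : ℕ) : Sdiff a 0 c 0 = 0 := by
  simp [Sdiff, Par_eq_singleton_empty]

theorem Sdiff_succ (a b c d : ℕ) :
    (Sdiff (a + 1) b (c + 1) d : ℤ) = ∑ i ∈ range (b + 1), ∑ j ∈ range (d + 1),
      (|(i : ℤ) - j| * (#(Par a i) * #(Par c j)) + Sdiff a i c j) := by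
  have hcard (i j : ℕ) (l m : Finset (ℕ × ℕ)) :
      (#(consRow (range i) l ∆ consRow (range j) m) : ℤ) = |(i : ℤ) - j| + #(l ∆ m) := by
    rw [consRow_symmDiff_consRow, card_consRow, Nat.cast_add, card_range_symmDiff_range]
  simp only [Sdiff, Nat.cast_sum, sum_Par_succ, hcard]
  refine sum_congr rfl fun i _ => ?_
  rw [sum_comm]
  refine sum_congr rfl fun j _ => ?_
  simp only [sum_add_distrib, sum_const, nsmul_eq_mul]
  ring

/-- `S⊖(s, p - 1 | s, q - 1)`, extended by `0` to `p = 0` and `q = 0`, where the truncated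
subtraction `p - 1` would give a wrong value. -/
noncomputable def shiftedSdiff (s : ℕ) : ℕ → ℕ → ℤ
  | p + 1, q + 1 => Sdiff s p s q
  | _, _ => 0

theorem shiftedSdiff_succ_succ (s p q : ℕ) : shiftedSdiff s (p + 1) (q + 1) = Sdiff s p s q := rfl

theorem shiftedSdiff_zero_left (s q : ℕ) : shiftedSdiff s 0 q = 0 := by
  simp [shiftedSdiff]

theorem shiftedSdiff_zero_right (s p : ℕ) : shiftedSdiff s p 0 = 0 := by
  simp [shiftedSdiff]

theorem shiftedSdiff_zero_rows (p q : ℕ) : shiftedSdiff 0 p q = 0 := by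
  cases p <;> cases q <;> simp [shiftedSdiff, Sdiff_zero_rows]

theorem shiftedSdiff_succ_rows (s p q : ℕ) :
    shiftedSdiff (s + 1) p q = ∑ i ∈ range p, ∑ j ∈ range q,
      (|(i : ℤ) - j| * (#(Par s i) * #(Par s j)) + shiftedSdiff s (i + 1) (j + 1)) := by
  cases p <;> cases q <;> simp [shiftedSdiff, Sdiff_succ]

theorem shiftedSdiff_succ_succ_succ (s p q : ℕ) :
    shiftedSdiff (s + 1) (p + 1) (q + 1)
      = shiftedSdiff (s + 1) p (q + 1) + shiftedSdiff (s + 1) (p + 1) q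
        - shiftedSdiff (s + 1) p q + shiftedSdiff s (p + 1) (q + 1)
        + |(p : ℤ) - q| * ((p + s).choose p * (q + s).choose q) := by
  simp only [shiftedSdiff_succ_rows, sum_range_succ, sum_add_distrib, card_Par]
  ring

/-- The same recursion at `(p - k, q - k)`. It survives truncation for `k > p` or `k > q` because
`shiftedSdiff` vanishes at `0` and so does `p.choose k * q.choose k`. -/
theorem shiftedSdiff_succ_sub (k p q : ℕ) :
    shiftedSdiff (k + 1) (p + 1 - k) (q + 1 - k)
      = shiftedSdiff (k + 1) (p - k) (q + 1 - k) + shiftedSdiff (k + 1) (p + 1 - k) (q - k)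
        - shiftedSdiff (k + 1) (p - k) (q - k) + shiftedSdiff k (p + 1 - k) (q + 1 - k)
        + |(p : ℤ) - q| * (p.choose k * q.choose k) := by
  obtain hp | hp := lt_or_ge p k
  · simp [Nat.sub_eq_zero_of_le hp, Nat.sub_eq_zero_of_le hp.le, Nat.choose_eq_zero_of_lt hp,
      shiftedSdiff_zero_left]
  obtain hq | hq := lt_or_ge q k
  · simp [Nat.sub_eq_zero_of_le hq, Nat.sub_eq_zero_of_le hq.le, Nat.choose_eq_zero_of_lt hq,
      shiftedSdiff_zero_right]
  obtain ⟨a, rfl⟩ := Nat.exists_eq_add_of_le' hp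
  obtain ⟨b, rfl⟩ := Nat.exists_eq_add_of_le' hq
  simp only [Nat.add_right_comm _ k 1, Nat.add_sub_cancel, shiftedSdiff_succ_succ_succ,
    ← Nat.choose_symm_add (a := a), ← Nat.choose_symm_add (a := b), Nat.cast_add,
    add_sub_add_right_eq_sub]

theorem W_coeff (p q k : ℕ) : (W (p + 1) (q + 1)).coeff k = p.choose k * q.choose k := by
  simp only [W, Polynomial.finsetSum_coeff, Polynomial.coeff_C_mul_X_pow, Nat.add_sub_cancel,
    sum_ite_eq, mem_range]
  refine ite_eq_left_iff.2 fun hk => ?_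
  obtain h | h : p < k ∨ q < k := by omega
  all_goals simp [Nat.choose_eq_zero_of_lt h]

theorem W_one_left (q : ℕ) : W 1 (q + 1) = 1 := by
  simp [W]

theorem W_one_right (p : ℕ) : W (p + 1) 1 = 1 := by
  simp [W]

theorem W_succ_succ (p q : ℕ) : W (p + 2) (q + 2)
    = W (p + 1) (q + 2) + W (p + 2) (q + 1) - (1 - Polynomial.X) * W (p + 1) (q + 1) := by
  ext (_ | k)
  · simp [W_coeff, sub_mul]
  · simp only [sub_mul, one_mul, Polynomial.coeff_sub, Polynomial.coeff_add,
      Polynomial.coeff_X_mul, W_coeff, Nat.choose_succ_succ, Nat.cast_add]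
    ring

/-- The generating function `∑ₛ |Par(s×p)| · |Par(s×q)| tˢ` of pairs of diagrams. -/
noncomputable def pairSeries (p q : ℕ) : ℤ⟦X⟧ :=
  PowerSeries.mk fun s => (#(Par s p) * #(Par s q) : ℤ)

theorem coeff_pairSeries (p q s : ℕ) :
    PowerSeries.coeff s (pairSeries p q) = (p + s).choose p * (q + s).choose q := by
  rw [pairSeries, PowerSeries.coeff_mk, card_Par, card_Par]

theorem pairSeries_comm (p q : ℕ) : pairSeries p q = pairSeries q p := by
  simp only [pairSeries, mul_comm]

theorem pairSeries_zero_left (q : ℕ) :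
    pairSeries 0 q = PowerSeries.mk fun s => ((q + s).choose q : ℤ) := by
  simp [pairSeries, card_Par]

theorem one_sub_X_mul_pairSeries (p q : ℕ) :
    (1 - PowerSeries.X) * pairSeries (p + 1) (q + 1)
      = pairSeries p (q + 1) + pairSeries (p + 1) q - pairSeries p q := by
  ext (_ | s)
  · simp [sub_mul, pairSeries, card_Par]
  · have pascal (r : ℕ) : (r + 1 + (s + 1)).choose (r + 1)
        = (r + (s + 1)).choose r + (r + 1 + s).choose (r + 1) := by
      rw [← add_assoc, Nat.choose_succ_succ, add_right_comm r 1 s, add_assoc r s 1]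
    simp only [sub_mul, one_mul, map_sub, map_add, PowerSeries.coeff_succ_X_mul,
      coeff_pairSeries, pascal, Nat.cast_add]
    ring

theorem pairSeries_mul_one_sub_X_pow (p q : ℕ) :
    pairSeries p q * (1 - PowerSeries.X) ^ (p + q + 1) = (W (p + 1) (q + 1) : ℤ⟦X⟧) := by
  induction p generalizing q with
  | zero =>
    rw [zero_add, zero_add, W_one_left, Polynomial.coe_one, pairSeries_zero_left,
      PowerSeries.mk_add_choose_mul_one_sub_pow_eq_one]
  | succ p ihp =>
    induction q with
    | zero =>
      rw [add_zero, zero_add, W_one_right, Polynomial.coe_one, pairSeries_comm,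
        pairSeries_zero_left, PowerSeries.mk_add_choose_mul_one_sub_pow_eq_one]
    | succ q ihq =>
      rw [W_succ_succ]
      push_cast
      rw [← ihp, ← ihp, ← ihq]
      linear_combination (1 - PowerSeries.X) ^ (p + q + 2) * one_sub_X_mul_pairSeries p q

/-- The generating function `∑ₛ S⊖(s, p - 1 | s, q - 1) tˢ`, read as `0` for `p = 0` or `q = 0`. -/
noncomputable def sdiffSeries (p q : ℕ) : ℤ⟦X⟧ :=
  PowerSeries.mk fun s => shiftedSdiff s p q

theorem sdiffSeries_succ_succ (p q : ℕ) :
    sdiffSeries (p + 1) (q + 1) = PowerSeries.mk fun s => (Sdiff s p s q : ℤ) := rfl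

theorem sdiffSeries_zero_left (q : ℕ) : sdiffSeries 0 q = 0 := by
  ext s
  simp [sdiffSeries, shiftedSdiff_zero_left]

theorem sdiffSeries_zero_right (p : ℕ) : sdiffSeries p 0 = 0 := by
  ext s
  simp [sdiffSeries, shiftedSdiff_zero_right]

theorem one_sub_X_mul_sdiffSeries (p q : ℕ) :
    (1 - PowerSeries.X) * sdiffSeries (p + 1) (q + 1)
      = sdiffSeries p (q + 1) + sdiffSeries (p + 1) q - sdiffSeries p q
        + PowerSeries.C |(p : ℤ) - q| * (PowerSeries.X * pairSeries p q) := by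
  ext (_ | s)
  · simp [sub_mul, sdiffSeries, shiftedSdiff_zero_rows]
  · simp only [sub_mul, one_mul, map_sub, map_add, PowerSeries.coeff_C_mul,
      PowerSeries.coeff_succ_X_mul, coeff_pairSeries, sdiffSeries, PowerSeries.coeff_mk,
      shiftedSdiff_succ_succ_succ]
    ring

/-- The defining recursion of the polynomials `N_{pq}`, shifted by one so that no natural
subtraction occurs; at `p = q = 0` the recursion reproduces the initial value `N_{11} = 0`. -/
structure IsNumeratorFamily (N : ℕ → ℕ → Polynomial ℤ) : Prop where
  zero_left (q : ℕ) : N 0 q = 0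
  zero_right (p : ℕ) : N p 0 = 0
  succ_succ (p q : ℕ) : N (p + 1) (q + 1)
    = N p (q + 1) + N (p + 1) q - (1 - Polynomial.X) * N p q
      + Polynomial.C |(p : ℤ) - q| * (Polynomial.X * W (p + 1) (q + 1))

namespace IsNumeratorFamily

variable {N : ℕ → ℕ → Polynomial ℤ}

theorem of_recursion (h0q : ∀ q, N 0 q = 0) (hp0 : ∀ p, N p 0 = 0) (h11 : N 1 1 = 0)
    (hrec : ∀ p q : ℕ, 1 ≤ p → 1 ≤ q → ¬(p = 1 ∧ q = 1) →
      N p q = N (p - 1) q + N p (q - 1) - (1 - Polynomial.X) * N (p - 1) (q - 1)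
        + Polynomial.C (|(p : ℤ) - (q : ℤ)|) * Polynomial.X * W p q) :
    IsNumeratorFamily N where
  zero_left := h0q
  zero_right := hp0
  succ_succ p q := by
    by_cases h : p = 0 ∧ q = 0
    · obtain ⟨rfl, rfl⟩ := h
      simp [h11, h0q, hp0]
    · rw [hrec (p + 1) (q + 1) (by simp) (by simp) (by simpa using h)]
      simp [mul_assoc]

theorem sdiffSeries_mul_one_sub_X_pow (hN : IsNumeratorFamily N) (p q : ℕ) :
    sdiffSeries p q * (1 - PowerSeries.X) ^ (p + q) = (N p q : ℤ⟦X⟧) := by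
  induction p generalizing q with
  | zero => rw [sdiffSeries_zero_left, hN.zero_left, zero_mul, Polynomial.coe_zero]
  | succ p ihp =>
    induction q with
    | zero => rw [sdiffSeries_zero_right, hN.zero_right, zero_mul, Polynomial.coe_zero]
    | succ q ihq =>
      rw [hN.succ_succ]
      push_cast
      rw [← ihp, ← ihp, ← ihq, ← pairSeries_mul_one_sub_X_pow]
      linear_combination (1 - PowerSeries.X) ^ (p + q + 1) * one_sub_X_mul_sdiffSeries p q

theorem coeff_eq_shiftedSdiff (hN : IsNumeratorFamily N) (p q k : ℕ) :
    (N p q).coeff k = shiftedSdiff k (p + 1 - k) (q + 1 - k) := by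
  induction p generalizing q k with
  | zero => cases k <;> simp [hN.zero_left, shiftedSdiff_zero_rows, shiftedSdiff_zero_left]
  | succ p ihp =>
    induction q generalizing k with
    | zero => cases k <;> simp [hN.zero_right, shiftedSdiff_zero_rows, shiftedSdiff_zero_right]
    | succ q ihq =>
      rw [hN.succ_succ]
      cases k with
      | zero => simp [sub_mul, ihp, ihq, shiftedSdiff_zero_rows]
      | succ k =>
        simp only [sub_mul, one_mul, Polynomial.coeff_sub, Polynomial.coeff_add,
          Polynomial.coeff_C_mul, Polynomial.coeff_X_mul, W_coeff, ihp, ihq,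
          Nat.add_sub_add_right, shiftedSdiff_succ_sub]
        ring

end IsNumeratorFamily

theorem coeff_eq_sum_of_mul_one_sub_X_pow_eq {R : Type*} [CommRing R] {F P : R⟦X⟧} {d : ℕ}
    (h : F * (1 - PowerSeries.X) ^ (d + 1) = P) (s : ℕ) :
    PowerSeries.coeff s F
      = ∑ k ∈ range (s + 1), PowerSeries.coeff k P * (s - k + d).choose d := by
  have hF : F = P * PowerSeries.mk fun s => ((d + s).choose d : R) := by
    rw [← h, mul_assoc, mul_comm (_ ^ _),
      PowerSeries.mk_add_choose_mul_one_sub_pow_eq_one, mul_one]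
  simp only [hF, PowerSeries.coeff_mul, Nat.sum_antidiagonal_eq_sum_range_succ_mk,
    PowerSeries.coeff_mk, add_comm d]

theorem sum_Icc_min_succ_of_eq_zero {M : Type*} [AddCommMonoid M] {f : ℕ → M} {m : ℕ}
    (hf : f (m + 1) = 0) (a s : ℕ) :
    ∑ k ∈ Icc a (min s (m + 1)), f k = ∑ k ∈ Icc a (min s m), f k := by
  symm
  refine sum_subset (Icc_subset_Icc_right (min_le_min_left s m.le_succ)) fun k hk hk' => ?_
  rw [mem_Icc] at hk hk'
  rwa [show k = m + 1 by omega]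

theorem Hn_rational_form_general {N : ℕ → ℕ → Polynomial ℤ} (hN : IsNumeratorFamily N)
    (p q : ℕ) :
    PowerSeries.mk (fun s => (Sdiff s p s q : ℤ)) * (1 - PowerSeries.X) ^ (p + q + 2)
        = (N (p + 1) (q + 1) : ℤ⟦X⟧) ∧
      ∀ s : ℕ, Sdiff s p s q = ∑ k ∈ Icc 1 (min s (min p q + 1)),
        Sdiff k (p + 1 - k) k (q + 1 - k) * (s - k + (p + q + 1)).choose (p + q + 1) := by
  have hseries := hN.sdiffSeries_mul_one_sub_X_pow (p + 1) (q + 1)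
  rw [sdiffSeries_succ_succ, add_add_add_comm p 1 q 1] at hseries
  refine ⟨hseries, fun s => ?_⟩
  have hcoeff := coeff_eq_sum_of_mul_one_sub_X_pow_eq hseries s
  simp only [PowerSeries.coeff_mk, Polynomial.coeff_coe, hN.coeff_eq_shiftedSdiff] at hcoeff
  zify
  rw [hcoeff]
  symm
  refine sum_subset_zero_on_sdiff (fun k hk => ?_) (fun k hk => ?_) (fun k hk => ?_)
  · simp only [mem_Icc, mem_range] at hk ⊢
    omega
  · simp only [mem_sdiff, mem_Icc, mem_range] at hk
    obtain rfl | hp | hq : k = 0 ∨ p + 1 + 1 - k = 0 ∨ q + 1 + 1 - k = 0 := by omega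
    · rw [shiftedSdiff_zero_rows, zero_mul]
    · rw [hp, shiftedSdiff_zero_left, zero_mul]
    · rw [hq, shiftedSdiff_zero_right, zero_mul]
  · rw [mem_Icc] at hk
    rw [Nat.succ_sub (by omega : k ≤ p + 1), Nat.succ_sub (by omega : k ≤ q + 1),
      shiftedSdiff_succ_succ]

/-- The rational form `H'_n(t) = N_n(t)/(1-t)^{2n}` combined with Theorem 3.1: as formal
power series, `Σ_{s≥0} S⊖(s, n-1 | s, n-1) t^s · (1-t)^{2n} = N_{nn}(t)`; extracting the
coefficient of `t^s` gives
`S⊖(s, n-1 | s, n-1) = Σ_{k=1}^{min(s,n-1)} S⊖(k, n-k | k, n-k)·C(s-k+2n-1, 2n-1)`. -/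
theorem Hn_rational_form (N : ℕ → ℕ → Polynomial ℤ)
    (h0q : ∀ q, N 0 q = 0) (hp0 : ∀ p, N p 0 = 0) (h11 : N 1 1 = 0)
    (hrec : ∀ p q : ℕ, 1 ≤ p → 1 ≤ q → ¬(p = 1 ∧ q = 1) →
      N p q = N (p - 1) q + N p (q - 1) - (1 - Polynomial.X) * N (p - 1) (q - 1)
        + Polynomial.C (|(p : ℤ) - (q : ℤ)|) * Polynomial.X * W p q)
    (n : ℕ) (hn : 1 ≤ n) :
    (PowerSeries.mk (fun s => (Sdiff s (n - 1) s (n - 1) : ℤ)))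
        * (1 - PowerSeries.X) ^ (2 * n) = (N n n : PowerSeries ℤ) ∧
    ∀ s : ℕ,
      Sdiff s (n - 1) s (n - 1)
        = ∑ k ∈ Finset.Icc 1 (min s (n - 1)),
            Sdiff k (n - k) k (n - k) * (s - k + 2 * n - 1).choose (2 * n - 1) := by
  obtain ⟨m, rfl⟩ := Nat.exists_eq_add_of_le' hn
  obtain ⟨hseries, hsum⟩ :=
    Hn_rational_form_general (IsNumeratorFamily.of_recursion h0q hp0 h11 hrec) m m
  have hexp : 2 * (m + 1) = m + m + 2 := by ring
  rw [hexp]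
  refine ⟨hseries, fun s => (hsum s).trans ?_⟩
  rw [min_self, sum_Icc_min_succ_of_eq_zero (by simp [Sdiff_zero_cols])]
  rfl
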